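/- Let Γ be a distance-regular graph of diameter D ≥ 2, and let q be a nonzero real number with −1 < q < 1. Assume that the q-distance matrix 𝔻_q of Γ has exactly one positive eigenvalue. Then the intersection number c_2 of Γ equals 1, and 0 < q < 1. -/

import Mathlib

/-- `G` is a distance-regular graph of diameter `D` with intersection numbers
`p h i j = p^h_{ij}`: for any two vertices `x, y` at distance `h`, the number of
vertices `z` with `d(x,z) = i` and `d(y,z) = j` equals `p h i j`. -/
structure IsDRG {V : Type*} [Fintype V] (G : SimpleGraph V) (D : ℕ)
    (p : ℕ → ℕ → ℕ → ℕ) : Prop where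
  connected : G.Connected
  dist_le : ∀ x y : V, G.dist x y ≤ D
  exists_dist_eq : ∃ x y : V, G.dist x y = D
  inter : ∀ h i j : ℕ, h ≤ D → i ≤ D → j ≤ D → ∀ x y : V, G.dist x y = h →
    {z : V | G.dist x z = i ∧ G.dist y z = j}.ncard = p h i j

/-- `u` is the standard sequence of `θ` for a distance-regular graph with
intersection numbers `p` (so valency `k = b₀ = p 0 1 1`, `cᵢ = p i 1 (i-1)`,
`aᵢ = p i 1 i`, `bᵢ = p i 1 (i+1)`). -/
def IsStdSeq (D : ℕ) (p : ℕ → ℕ → ℕ → ℕ) (θ : ℝ) (u : ℕ → ℝ) : Prop :=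
  u 0 = 1 ∧ u 1 = θ / (p 0 1 1 : ℝ) ∧
    ∀ i : ℕ, 1 ≤ i → i ≤ D - 1 →
      (p i 1 (i - 1) : ℝ) * u (i - 1) + (p i 1 i : ℝ) * u i
          + (p i 1 (i + 1) : ℝ) * u (i + 1) = θ * u i

/-- The sequence `u` (a standard sequence) is of classical `q`-type:
`u i = (1/q) * u (i-1) + c` for `i = 1, …, D`, for some real `c`. -/
def IsClassicalQType (D : ℕ) (q : ℝ) (u : ℕ → ℝ) : Prop :=
  ∃ c : ℝ, ∀ i : ℕ, 1 ≤ i → i ≤ D → u i = (1 / q) * u (i - 1) + c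

/-- `θ` is an eigenvalue of the adjacency matrix of `G`. -/
def IsAdjEigenval {V : Type*} [Fintype V] (G : SimpleGraph V) [DecidableRel G.Adj]
    (θ : ℝ) : Prop :=
  ∃ v : V → ℝ, v ≠ 0 ∧ (G.adjMatrix ℝ).mulVec v = θ • v

/-- The `q`-distance matrix of a graph `G`: the `(x,y)` entry is
`∑_{j=0}^{d(x,y)-1} q^{-j}` (and `0` on the diagonal, since `d(x,x) = 0`). -/
noncomputable def qDistMatrix {V : Type*} [Fintype V] (G : SimpleGraph V) (q : ℝ) :
    Matrix V V ℝ :=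
  Matrix.of fun x y => ∑ j ∈ Finset.range (G.dist x y), (1 / q) ^ j

/-! Having one positive eigenvalue, `𝔻_q` cannot be positive on two vectors orthogonal for its
form. If `q < 0`, the vertices of a geodesic of length two support such a pair; if `q > 0`, the
all-ones vector is positive, so `𝔻_q` is of negative type.

Suppose `c₂ ≠ 1`. Negative type, tested on quadrilaterals, makes the common neighbours of two
vertices at distance two a clique, so the local graphs are Terwilliger graphs with parameter
`c₂ - 1`; tested around a vertex, it forces the local eigenvalues above `-2`. A regular noncomplete
Terwilliger graph with this spectral bound is a pentagon. For parameter one this is a count of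
claws; a larger parameter would, by induction on the neighbourhoods, give a graph that is locally a
pentagon with parameter two, which is `5`-regular on `11` vertices. Finally, a distance-regular
graph that is locally a pentagon has the parameters of the icosahedron, and there two pairs of
antipodes violate the quadrilateral inequality. -/

open Matrix SimpleGraph

section LinearAlgebra

variable {V : Type*} [Fintype V]

section Eigenvalues

variable [DecidableEq V] {A : Matrix V V ℝ}

lemma dotProduct_mulVec_eq_sum_eigenvalues (hA : A.IsHermitian) (z : V → ℝ) :
    z ⬝ᵥ A *ᵥ z = ∑ i, hA.eigenvalues i * ((hA.eigenvectorBasis i).ofLp ⬝ᵥ z) ^ 2 := by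
  have hsymm : Aᵀ = A := by simpa only [conjTranspose_eq_transpose_of_trivial] using hA.eq
  have hcoord (i : V) : A *ᵥ z ⬝ᵥ (hA.eigenvectorBasis i).ofLp =
      hA.eigenvalues i * ((hA.eigenvectorBasis i).ofLp ⬝ᵥ z) := by
    rw [dotProduct_comm, dotProduct_mulVec, ← mulVec_transpose, hsymm, hA.mulVec_eigenvectorBasis,
      smul_dotProduct, smul_eq_mul]
  have hparseval :=
    hA.eigenvectorBasis.sum_inner_mul_inner (WithLp.toLp 2 z) (WithLp.toLp 2 (A *ᵥ z))
  simp only [EuclideanSpace.inner_eq_star_dotProduct, star_trivial, hcoord] at hparseval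
  rw [dotProduct_comm, ← hparseval]
  exact Finset.sum_congr rfl fun i _ => by ring

lemma dotProduct_mulVec_ne_zero_of_card_pos_eigenvalues_le_one (hA : A.IsHermitian)
    (hone : (Finset.univ.filter fun i : V => 0 < hA.eigenvalues i).card ≤ 1) {u v : V → ℝ}
    (hu : 0 < u ⬝ᵥ A *ᵥ u) (hv : 0 < v ⬝ᵥ A *ᵥ v) : u ⬝ᵥ A *ᵥ v ≠ 0 := by
  intro huv
  have hvu : v ⬝ᵥ A *ᵥ u = 0 := by
    have hsymm : Aᵀ = A := by simpa only [conjTranspose_eq_transpose_of_trivial] using hA.eq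
    rw [dotProduct_mulVec, ← mulVec_transpose, hsymm, dotProduct_comm, huv]
  obtain ⟨i, -, hi⟩ : ∃ i ∈ Finset.univ,
      0 < hA.eigenvalues i * ((hA.eigenvectorBasis i).ofLp ⬝ᵥ v) ^ 2 := by
    rw [dotProduct_mulVec_eq_sum_eigenvalues hA] at hv
    exact Finset.exists_lt_of_sum_lt (by simpa using hv)
  have hi_pos : 0 < hA.eigenvalues i := pos_of_mul_pos_left hi (sq_nonneg _)
  set e := (hA.eigenvectorBasis i).ofLp with he
  have hev : e ⬝ᵥ v ≠ 0 := fun h => by simp [h] at hi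
  -- `z` is the combination of `u` and `v` orthogonal to the only positive eigenvector.
  set z := (e ⬝ᵥ v) • u - (e ⬝ᵥ u) • v with hz
  have hez : e ⬝ᵥ z = 0 := by
    simp only [hz, dotProduct_sub, dotProduct_smul, smul_eq_mul]
    ring
  have hnonpos : z ⬝ᵥ A *ᵥ z ≤ 0 := by
    rw [dotProduct_mulVec_eq_sum_eigenvalues hA]
    refine Finset.sum_nonpos fun j _ => ?_
    rcases eq_or_ne j i with rfl | hji
    · rw [← he, hez]
      simp
    · refine mul_nonpos_of_nonpos_of_nonneg (not_lt.1 fun hj => hji ?_) (sq_nonneg _)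
      exact Finset.card_le_one.1 hone j (by simpa using hj) i (by simpa using hi_pos)
  have hexpand : z ⬝ᵥ A *ᵥ z =
      (e ⬝ᵥ v) ^ 2 * (u ⬝ᵥ A *ᵥ u) + (e ⬝ᵥ u) ^ 2 * (v ⬝ᵥ A *ᵥ v) := by
    simp only [hz, mulVec_sub, mulVec_smul, dotProduct_sub, sub_dotProduct, dotProduct_smul,
      smul_dotProduct, huv, hvu, smul_eq_mul]
    ring
  have : 0 < (e ⬝ᵥ v) ^ 2 * (u ⬝ᵥ A *ᵥ u) := by positivity
  nlinarith [mul_nonneg (sq_nonneg (e ⬝ᵥ u)) hv.le]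

end Eigenvalues

/-- A real matrix is of (conditionally) negative type if its quadratic form is nonpositive on the
vectors with coordinate sum zero; this is the property of `𝔻_q` that the proof exploits. -/
def IsNegativeType (M : Matrix V V ℝ) : Prop :=
  ∀ w : V → ℝ, ∑ v, w v = 0 → w ⬝ᵥ M *ᵥ w ≤ 0

namespace IsNegativeType

variable {M : Matrix V V ℝ}

lemma of_card_pos_eigenvalues_le_one [DecidableEq V] [Nonempty V] (hM : M.IsHermitian)
    (hone : (Finset.univ.filter fun i : V => 0 < hM.eigenvalues i).card ≤ 1) {s : ℝ} (hs : 0 < s)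
    (hrow : ∀ x, ∑ y, M x y = s) : IsNegativeType M := by
  intro w hw
  by_contra! hpos
  have hones : M *ᵥ 1 = s • 1 := by
    ext x
    simp only [mulVec, dotProduct_one, hrow, Pi.smul_apply, Pi.one_apply, smul_eq_mul, mul_one]
  refine dotProduct_mulVec_ne_zero_of_card_pos_eigenvalues_le_one hM hone hpos
    (v := 1) ?_ ?_
  · rw [hones, dotProduct_smul, one_dotProduct_one, smul_eq_mul]
    positivity
  · rw [hones, dotProduct_smul, dotProduct_one, hw, smul_zero]

section Symmetric

variable (hM : IsNegativeType M) (hsymm : M.IsSymm) (hdiag : ∀ x, M x x = 0)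
include hM hsymm hdiag

lemma quadrilateral (a b c d : V) :
    M a d + M b c ≤ M a b + M a c + M b d + M c d := by
  classical
  have h := hM (Pi.single a 1 - Pi.single b 1 - Pi.single c 1 + Pi.single d 1) (by
    simp [Finset.sum_add_distrib, Finset.sum_sub_distrib])
  simp only [mulVec_add, mulVec_sub, dotProduct_add, add_dotProduct, dotProduct_sub,
    sub_dotProduct, mulVec_single_one, single_one_dotProduct, col_apply, hdiag,
    hsymm.apply a b, hsymm.apply a c, hsymm.apply a d, hsymm.apply b c, hsymm.apply b d,
    hsymm.apply c d] at h
  linarith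

-- The quadratic form at `z` is that of `-M` at the zero-sum vector `z - (∑ z) • e_x`.
lemma posSemidef_gromovProduct (x : V) :
    (of fun u v => M u x + M x v - M u v).PosSemidef := by
  classical
  refine .of_dotProduct_mulVec_nonneg (IsHermitian.ext fun u v => ?_) fun z => ?_
  · simp only [of_apply, star_trivial, hsymm.apply u x, hsymm.apply x v, hsymm.apply v u]
    ring
  · set σ := ∑ v, z v with hσ
    have h := hM (z - σ • Pi.single x 1) (by
      simp [Finset.sum_sub_distrib, ← Finset.mul_sum, hσ])
    simp only [mulVec_sub, mulVec_smul, dotProduct_sub, sub_dotProduct, dotProduct_smul,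
      smul_dotProduct, mulVec_single_one, single_one_dotProduct, col_apply, hdiag, smul_eq_mul,
      mul_zero, sub_zero] at h
    have hexpand : z ⬝ᵥ (of fun u v => M u x + M x v - M u v) *ᵥ z =
        σ * (z ⬝ᵥ M.col x) + σ * (M *ᵥ z) x - z ⬝ᵥ M *ᵥ z := by
      have hsplit : (of fun u v => M u x + M x v - M u v) =
          vecMulVec (M.col x) 1 + vecMulVec 1 (M.row x) - M := by
        ext u v
        simp
      rw [hsplit, sub_mulVec, add_mulVec, vecMulVec_mulVec, vecMulVec_mulVec, dotProduct_sub,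
        dotProduct_add]
      simp [hσ, mulVec, row_def, dotProduct_one, one_dotProduct, mul_comm]
    rw [star_trivial, hexpand]
    linarith

end Symmetric

end IsNegativeType

end LinearAlgebra

section BipartiteCounting

variable {α β : Type*} [Finite α] [Finite β]

lemma ncard_mul_eq_ncard_mul (r : α → β → Prop) {S : Set α} {T : Set β} {m n : ℕ}
    (hS : ∀ a ∈ S, {b ∈ T | r a b}.ncard = m) (hT : ∀ b ∈ T, {a ∈ S | r a b}.ncard = n) :
    S.ncard * m = T.ncard * n := by
  classical
  have := Fintype.ofFinite α
  have := Fintype.ofFinite β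
  rw [Set.ncard_eq_toFinset_card' S, Set.ncard_eq_toFinset_card' T]
  refine Finset.card_mul_eq_card_mul r (fun a ha => ?_) fun b hb => ?_
  · rw [← hS a (Set.mem_toFinset.1 ha), ← Set.ncard_coe_finset]
    simp [Finset.bipartiteAbove]
  · rw [← hT b (Set.mem_toFinset.1 hb), ← Set.ncard_coe_finset]
    simp [Finset.bipartiteBelow]

-- Give the edge `r a b` the weight inverse to the common degree of `a` and `b`.
lemma ncard_eq_ncard_of_degrees_eq (r : α → β → Prop) {S : Set α} {T : Set β}
    (hS : ∀ a ∈ S, {b ∈ T | r a b}.Nonempty) (hT : ∀ b ∈ T, {a ∈ S | r a b}.Nonempty)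
    (h : ∀ a ∈ S, ∀ b ∈ T, r a b → {b ∈ T | r a b}.ncard = {a ∈ S | r a b}.ncard) :
    S.ncard = T.ncard := by
  classical
  have := Fintype.ofFinite α
  have := Fintype.ofFinite β
  have hrow : ∀ a ∈ S.toFinset,
      ∑ b ∈ T.toFinset with r a b, ({b ∈ T | r a b}.ncard : ℚ)⁻¹ = 1 := fun a ha => by
    have hne := (Set.ncard_pos).2 (hS a (Set.mem_toFinset.1 ha))
    have hcard : {b ∈ T.toFinset | r a b}.card = {b ∈ T | r a b}.ncard := by
      rw [← Set.ncard_coe_finset]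
      simp
    rw [Finset.sum_const, hcard, nsmul_eq_mul, mul_inv_cancel₀ (by positivity)]
  have hcol : ∀ b ∈ T.toFinset,
      ∑ a ∈ S.toFinset with r a b, ({a ∈ S | r a b}.ncard : ℚ)⁻¹ = 1 := fun b hb => by
    have hne := (Set.ncard_pos).2 (hT b (Set.mem_toFinset.1 hb))
    have hcard : {a ∈ S.toFinset | r a b}.card = {a ∈ S | r a b}.ncard := by
      rw [← Set.ncard_coe_finset]
      simp
    rw [Finset.sum_const, hcard, nsmul_eq_mul, mul_inv_cancel₀ (by positivity)]
  have hsum : (∑ _ ∈ S.toFinset, 1 : ℚ) = ∑ _ ∈ T.toFinset, 1 := by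
    rw [← Finset.sum_congr rfl hrow, ← Finset.sum_congr rfl hcol,
      Finset.sum_comm' (t' := T.toFinset) (s' := fun b => {a ∈ S.toFinset | r a b})
        (by simp only [Finset.mem_filter]; tauto)]
    refine Finset.sum_congr rfl fun b hb => Finset.sum_congr rfl fun a ha => ?_
    simp only [Finset.mem_filter, Set.mem_toFinset] at ha hb
    rw [h a ha.1 b hb ha.2]
  rw [Set.ncard_eq_toFinset_card' S, Set.ncard_eq_toFinset_card' T]
  simpa only [Finset.sum_const, nsmul_eq_mul, mul_one, Nat.cast_inj] using hsum

end BipartiteCounting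

section Terwilliger

variable {W : Type*} {H : SimpleGraph W} {m : ℕ}

/-- A Terwilliger graph of diameter at most two: any two nonadjacent vertices have exactly `m`
common neighbours, and these form a clique. -/
structure IsTerwilliger (H : SimpleGraph W) (m : ℕ) : Prop where
  ncard_commonNeighbors : ∀ ⦃u v⦄, u ≠ v → ¬H.Adj u v → (H.commonNeighbors u v).ncard = m
  isClique_commonNeighbors : ∀ ⦃u v⦄, u ≠ v → ¬H.Adj u v → H.IsClique (H.commonNeighbors u v)

namespace IsTerwilliger

lemma adj (hH : IsTerwilliger H m) {u v p q : W} (huv : u ≠ v) (hnuv : ¬H.Adj u v)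
    (hp : p ∈ H.commonNeighbors u v) (hq : q ∈ H.commonNeighbors u v) (hpq : p ≠ q) :
    H.Adj p q :=
  hH.isClique_commonNeighbors huv hnuv hp hq hpq

lemma exists_mem_commonNeighbors (hH : IsTerwilliger H m) (hm : m ≠ 0) {u v : W} (huv : u ≠ v)
    (hnuv : ¬H.Adj u v) : ∃ p, H.Adj u p ∧ H.Adj v p :=
  Set.nonempty_of_ncard_ne_zero (hH.ncard_commonNeighbors huv hnuv ▸ hm)

lemma inter_commonNeighbors_eq (hH : IsTerwilliger H m) {u v p s : W}
    (hnuv : ¬H.Adj u v) (hup : H.Adj u p) (hvp : ¬H.Adj v p) (hvs : H.Adj v s) (hus : ¬H.Adj u s)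
    (hps : H.Adj p s) :
    H.neighborSet p ∩ H.commonNeighbors u v = H.neighborSet s ∩ H.commonNeighbors u v := by
  have hpv : p ≠ v := fun h => hnuv (h ▸ hup)
  have hsu : s ≠ u := fun h => hnuv (h ▸ hvs).symm
  ext t
  simp only [Set.mem_inter_iff, mem_neighborSet, mem_commonNeighbors]
  refine and_congr_left fun ⟨hut, hvt⟩ => ⟨fun hpt => ?_, fun hst => ?_⟩
  · exact hH.adj hpv (fun h => hvp h.symm) ⟨hps, hvs⟩ ⟨hpt, hvt⟩ fun h => hus (h ▸ hut)
  · exact hH.adj hsu (fun h => hus h.symm) ⟨hps.symm, hup⟩ ⟨hst, hut⟩ fun h => hvp (h ▸ hvt)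

variable [Finite W]

lemma ncard_adj_not_adj (hH : IsTerwilliger H m) {u v w p : W} (huw : H.Adj u w) (hvw : H.Adj v w)
    (hnuv : ¬H.Adj u v) (hup : H.Adj u p) (hvp : ¬H.Adj v p) (hwp : ¬H.Adj w p) :
    {s ∈ H.neighborSet v \ (H.neighborSet u ∪ H.neighborSet w) | H.Adj p s}.ncard =
      m - (H.neighborSet p ∩ H.commonNeighbors u v).ncard := by
  have hpv : p ≠ v := fun h => hnuv (h ▸ hup)
  have hsub : H.neighborSet p ∩ H.commonNeighbors u v ⊆ H.commonNeighbors p v :=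
    fun t ht => ⟨ht.1, ht.2.2⟩
  rw [← hH.ncard_commonNeighbors hpv fun h => hvp h.symm, ← Set.ncard_sdiff hsub]
  congr 1
  ext s
  simp only [Set.mem_sdiff, Set.mem_union, Set.mem_inter_iff, mem_neighborSet,
    mem_commonNeighbors, not_or, not_and]
  refine ⟨fun ⟨⟨hvs, hus, _⟩, hps⟩ => ⟨⟨hps, hvs⟩, fun _ h => absurd h hus⟩,
    fun ⟨⟨hps, hvs⟩, h⟩ => ?_⟩
  have hus : ¬H.Adj u s := fun hus => h hps hus hvs
  refine ⟨⟨hvs, hus, fun hws => hwp ?_⟩, hps⟩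
  have hw : w ∈ H.neighborSet s ∩ H.commonNeighbors u v := ⟨hws.symm, huw, hvw⟩
  rw [← hH.inter_commonNeighbors_eq hnuv hup hvp hvs hus hps] at hw
  exact hw.1.symm

lemma ncard_inter_commonNeighbors_lt (hH : IsTerwilliger H m) {u v w p : W} (huv : u ≠ v)
    (hnuv : ¬H.Adj u v) (huw : H.Adj u w) (hvw : H.Adj v w) (hwp : ¬H.Adj w p) :
    (H.neighborSet p ∩ H.commonNeighbors u v).ncard < m := by
  rw [← hH.ncard_commonNeighbors huv hnuv]
  exact Set.ncard_lt_ncard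
    (Set.ssubset_iff_of_subset Set.inter_subset_right |>.2 ⟨w, ⟨huw, hvw⟩, fun h => hwp h.1.symm⟩)

lemma ncard_neighborSet_diff_union_eq (hH : IsTerwilliger H m) {u v w : W} (huv : u ≠ v)
    (hnuv : ¬H.Adj u v) (huw : H.Adj u w) (hvw : H.Adj v w) :
    (H.neighborSet u \ (H.neighborSet v ∪ H.neighborSet w)).ncard =
      (H.neighborSet v \ (H.neighborSet u ∪ H.neighborSet w)).ncard := by
  have hnvu : ¬H.Adj v u := fun h => hnuv h.symm
  have hright {p : W} (hp : p ∈ H.neighborSet u \ (H.neighborSet v ∪ H.neighborSet w)) :=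
    hH.ncard_adj_not_adj huw hvw hnuv hp.1 (fun h => hp.2 (.inl h)) fun h => hp.2 (.inr h)
  have hleft {s : W} (hs : s ∈ H.neighborSet v \ (H.neighborSet u ∪ H.neighborSet w)) :
      {p ∈ H.neighborSet u \ (H.neighborSet v ∪ H.neighborSet w) | H.Adj p s}.ncard =
        m - (H.neighborSet s ∩ H.commonNeighbors u v).ncard := by
    simp only [H.commonNeighbors_symm u v, H.adj_comm _ s]
    exact hH.ncard_adj_not_adj hvw huw hnvu hs.1 (fun h => hs.2 (.inl h)) fun h => hs.2 (.inr h)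
  refine ncard_eq_ncard_of_degrees_eq H.Adj (fun p hp => ?_) (fun s hs => ?_)
    fun p hp s hs hps => ?_
  · have := hH.ncard_inter_commonNeighbors_lt huv hnuv huw hvw fun h => hp.2 (.inr h)
    exact Set.nonempty_of_ncard_ne_zero (by rw [hright hp]; lia)
  · have := hH.ncard_inter_commonNeighbors_lt huv hnuv huw hvw fun h => hs.2 (.inr h)
    exact Set.nonempty_of_ncard_ne_zero (by rw [hleft hs]; lia)
  · rw [hright hp, hleft hs, hH.inter_commonNeighbors_eq hnuv hp.1 (fun h => hp.2 (.inl h)) hs.1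
      (fun h => hs.2 (.inl h)) hps]

lemma ncard_commonNeighbors_eq (hH : IsTerwilliger H m) {u v w : W} (huv : u ≠ v)
    (hnuv : ¬H.Adj u v) (huw : H.Adj u w) (hvw : H.Adj v w)
    (hdeg : (H.neighborSet u).ncard = (H.neighborSet v).ncard) :
    (H.commonNeighbors w u).ncard = (H.commonNeighbors w v).ncard := by
  have hsplit {u v : W} (huv : u ≠ v) (hnuv : ¬H.Adj u v) (huw : H.Adj u w) (hvw : H.Adj v w) :
      H.neighborSet u \ H.neighborSet w =
        insert w (H.neighborSet u \ (H.neighborSet v ∪ H.neighborSet w)) := by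
    ext t
    simp only [Set.mem_sdiff, Set.mem_insert_iff, Set.mem_union, mem_neighborSet, not_or]
    refine ⟨fun ⟨hut, hwt⟩ => or_iff_not_imp_left.2 fun htw => ⟨hut, fun hvt => hwt ?_, hwt⟩, ?_⟩
    · exact hH.adj huv hnuv ⟨huw, hvw⟩ ⟨hut, hvt⟩ (Ne.symm htw)
    · rintro (rfl | h)
      exacts [⟨huw, H.irrefl⟩, ⟨h.1, h.2.2⟩]
  have hdiff : (H.neighborSet u \ H.neighborSet w).ncard =
      (H.neighborSet v \ H.neighborSet w).ncard := by
    rw [hsplit huv hnuv huw hvw, hsplit huv.symm (fun h => hnuv h.symm) hvw huw,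
      Set.ncard_insert_of_notMem fun h => h.2 (.inl hvw),
      Set.ncard_insert_of_notMem fun h => h.2 (.inl huw),
      hH.ncard_neighborSet_diff_union_eq huv hnuv huw hvw]
  have hu := Set.ncard_inter_add_ncard_sdiff_eq_ncard (H.neighborSet u) (H.neighborSet w)
  have hv := Set.ncard_inter_add_ncard_sdiff_eq_ncard (H.neighborSet v) (H.neighborSet w)
  rw [commonNeighbors, commonNeighbors, Set.inter_comm, Set.inter_comm (H.neighborSet w)]
  lia

end IsTerwilliger

end Terwilliger

section LeastEigenvalue

variable {W U : Type*}

open Classical in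
/-- All adjacency eigenvalues of `H` exceed `-2`, encoded as positive definiteness of `A + 2I`, so
that induced subgraphs inherit it as principal submatrices. -/
def LeastEigenvalueGTNegTwo (H : SimpleGraph W) : Prop :=
  (H.adjMatrix ℝ + 2).PosDef

namespace LeastEigenvalueGTNegTwo

variable {H : SimpleGraph W}

lemma of_embedding {F : SimpleGraph U} (hH : LeastEigenvalueGTNegTwo H) (e : F ↪g H) :
    LeastEigenvalueGTNegTwo F := by
  classical
  have hsub : F.adjMatrix ℝ + 2 = (H.adjMatrix ℝ + 2).submatrix e e := by
    ext i j
    simp [SimpleGraph.adjMatrix_apply, Matrix.ofNat_apply, e.injective.eq_iff]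
  rw [LeastEigenvalueGTNegTwo] at *
  convert PosDef.submatrix hH e.injective

open Classical in
lemma quadraticForm_pos [Fintype U] (hH : LeastEigenvalueGTNegTwo H) {f : U → W}
    (hf : f.Injective) {x : U → ℝ} (hx : x ≠ 0) :
    0 < ∑ i, (∑ j, if H.Adj (f i) (f j) then x i * x j else 0) + 2 * ∑ i, x i ^ 2 := by
  have hform : star x ⬝ᵥ (H.adjMatrix ℝ + 2).submatrix f f *ᵥ x =
      ∑ i, (∑ j, if H.Adj (f i) (f j) then x i * x j else 0) + 2 * ∑ i, x i ^ 2 := by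
    simp [dotProduct, mulVec, Finset.mul_sum, adjMatrix_apply, Matrix.ofNat_apply, hf.eq_iff,
      mul_add, add_mul, Finset.sum_add_distrib, pow_two, mul_left_comm]
  exact hform ▸ (PosDef.submatrix hH hf).dotProduct_mulVec_pos hx

-- Alternating signs along the path `u, {w, w'}, {v, v'}, s` give a null vector of `A + 2I`.
lemma not_doubledPath (hH : LeastEigenvalueGTNegTwo H) {u w w' v v' s : W}
    (huw : H.Adj u w) (huw' : H.Adj u w') (hww' : H.Adj w w') (hwv : H.Adj w v)
    (hwv' : H.Adj w v') (hw'v : H.Adj w' v) (hw'v' : H.Adj w' v') (hvv' : H.Adj v v')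
    (hvs : H.Adj v s) (hv's : H.Adj v' s) (huv : ¬H.Adj u v) (huv' : ¬H.Adj u v')
    (hus : ¬H.Adj u s) (hws : ¬H.Adj w s) (hw's : ¬H.Adj w' s) : False := by
  have hinj : ![u, w, w', v, v', s].Injective := by
    intro i j hij
    fin_cases i <;> fin_cases j <;> simp_all [H.adj_comm]
  have hpos := hH.quadraticForm_pos hinj (x := ![1, -1, -1, 1, 1, -1])
    fun h => by simpa using congrFun h 0
  revert hpos
  simp [Fin.sum_univ_succ, *, huw.symm, huw'.symm, hww'.symm, hwv.symm, hwv'.symm, hw'v.symm,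
    hw'v'.symm, hvv'.symm, hvs.symm, hv's.symm, mt Adj.symm huv, mt Adj.symm huv', mt Adj.symm hus,
    mt Adj.symm hws, mt Adj.symm hw's]
  norm_num

-- The marks of the affine Dynkin diagram of type `D₅`, signed along its bipartition, give a null
-- vector of `A + 2I`.
lemma not_extendedDFive (hH : LeastEigenvalueGTNegTwo H) {w u v t p p' : W}
    (hwu : H.Adj w u) (hwv : H.Adj w v) (hwt : H.Adj w t) (hup : H.Adj u p) (hup' : H.Adj u p')
    (huv : ¬H.Adj u v) (hut : ¬H.Adj u t) (hvt : ¬H.Adj v t) (hvt_ne : v ≠ t)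
    (hwp : ¬H.Adj w p) (hwp' : ¬H.Adj w p') (hpp' : ¬H.Adj p p') (hpp'_ne : p ≠ p')
    (hvp : ¬H.Adj v p) (hvp' : ¬H.Adj v p') (htp : ¬H.Adj t p) (htp' : ¬H.Adj t p') : False := by
  have hinj : ![w, u, v, t, p, p'].Injective := by
    intro i j hij
    fin_cases i <;> fin_cases j <;> simp_all [H.adj_comm]
  have hpos := hH.quadraticForm_pos hinj (x := ![2, -2, -1, -1, 1, 1])
    fun h => by simpa using congrFun h 2
  revert hpos
  simp [Fin.sum_univ_succ, *, hwu.symm, hwv.symm, hwt.symm, hup.symm, hup'.symm,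
    mt Adj.symm huv, mt Adj.symm hut, mt Adj.symm hvt, mt Adj.symm hwp, mt Adj.symm hwp',
    mt Adj.symm hpp', mt Adj.symm hvp, mt Adj.symm hvp', mt Adj.symm htp, mt Adj.symm htp']
  norm_num

end LeastEigenvalueGTNegTwo

end LeastEigenvalue

section NeighborCounting

variable {W : Type*} {H : SimpleGraph W}

lemma ncard_neighborSet_induce (S : Set W) (u : S) :
    ((H.induce S).neighborSet u).ncard = (H.neighborSet u ∩ S).ncard := by
  rw [← Set.ncard_image_of_injective _ Subtype.val_injective]
  congr 1
  ext v
  simp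

lemma ncard_commonNeighbors_induce (S : Set W) (u v : S) :
    ((H.induce S).commonNeighbors u v).ncard = (H.commonNeighbors u v ∩ S).ncard := by
  rw [← Set.ncard_image_of_injective _ Subtype.val_injective]
  congr 1
  ext t
  simp [mem_commonNeighbors]

lemma neighborSet_inter_insert {w u : W} (hwu : H.Adj w u) :
    H.neighborSet w ∩ insert u (H.neighborSet u) = insert u (H.commonNeighbors w u) := by
  ext t
  simp only [Set.mem_inter_iff, Set.mem_insert_iff, mem_neighborSet, mem_commonNeighbors]
  refine ⟨fun ⟨hwt, h⟩ => h.imp_right (⟨hwt, ·⟩), ?_⟩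
  rintro (rfl | h)
  exacts [⟨hwu, .inl rfl⟩, ⟨h.1, .inr h.2⟩]

variable [Finite W] {a : ℕ}

lemma ncard_neighborSet_diff_add {w u : W} (hwu : H.Adj w u) :
    (H.neighborSet w \ insert u (H.neighborSet u)).ncard + (H.commonNeighbors w u).ncard + 1 =
      (H.neighborSet w).ncard := by
  rw [← Set.ncard_inter_add_ncard_sdiff_eq_ncard (H.neighborSet w) (insert u (H.neighborSet u)),
    neighborSet_inter_insert hwu, Set.ncard_insert_of_notMem fun h => H.irrefl h.2]
  lia

lemma exists_not_adj_of_ne_top (hreg : ∀ w, (H.neighborSet w).ncard = a) (htop : H ≠ ⊤) (w : W) :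
    ∃ z, w ≠ z ∧ ¬H.Adj w z := by
  by_contra! hall
  obtain ⟨u, v, huv, hnuv⟩ := ne_top_iff_exists_not_adj.1 htop
  have hw : H.neighborSet w = {w}ᶜ :=
    Set.Subset.antisymm (fun z hz => hz.ne') fun z hz => hall z (Ne.symm hz)
  have hu : H.neighborSet u ⊆ {u}ᶜ \ {v} := fun z hz => ⟨hz.ne', fun h => hnuv (h ▸ hz)⟩
  have hlt : ({u}ᶜ \ {v} : Set W).ncard < ({u}ᶜ : Set W).ncard :=
    Set.ncard_sdiff_singleton_lt_of_mem huv.symm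
  have hw' := hreg w
  have hu' := hreg u
  have := Set.ncard_le_ncard hu
  have h1 := Set.ncard_add_ncard_compl {w}
  have h2 := Set.ncard_add_ncard_compl {u}
  rw [Set.ncard_singleton] at h1 h2
  rw [hw] at hw'
  lia

lemma even_card_mul_of_regular (hreg : ∀ w, (H.neighborSet w).ncard = a) :
    Even (Nat.card W * a) := by
  classical
  have := Fintype.ofFinite W
  have hdeg (w : W) : H.degree w = a := by
    rw [← hreg w, ← card_neighborSet_eq_degree, Set.fintypeCard_eq_ncard]
  have h := H.sum_degrees_eq_twice_card_edges
  simp only [hdeg, Finset.sum_const, smul_eq_mul, Finset.card_univ, ← Nat.card_eq_fintype_card] at h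
  exact h ▸ even_two_mul _

lemma mul_sub_eq_card_sub_mul [Nonempty W] {l m : ℕ} (hreg : ∀ w, (H.neighborSet w).ncard = a)
    (hadj : ∀ u v, H.Adj u v → (H.commonNeighbors u v).ncard = l)
    (hnadj : ∀ u v, u ≠ v → ¬H.Adj u v → (H.commonNeighbors u v).ncard = m) :
    a * (a - l - 1) = (Nat.card W - a - 1) * m := by
  classical
  have := Fintype.ofFinite W
  refine IsSRGWith.param_eq (G := H) ⟨Nat.card_eq_fintype_card.symm, fun w => ?_,
    fun u v huv => ?_, fun u v huv hnuv => ?_⟩ Nat.card_pos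
  · rw [← hreg w, ← card_neighborSet_eq_degree, Set.fintypeCard_eq_ncard]
  · rw [Set.fintypeCard_eq_ncard, hadj u v huv]
  · rw [Set.fintypeCard_eq_ncard, hnadj u v huv hnuv]

end NeighborCounting

section Twins

variable {W : Type*} {H : SimpleGraph W}

/-- The neighbours `t` of `w` adjacent to every other neighbour of `w`. In a regular graph these are
the vertices `t ≠ w` with the same closed neighbourhood as `w`. -/
def twins (H : SimpleGraph W) (w : W) : Set W :=
  {t ∈ H.neighborSet w | ∀ p, H.Adj w p → p ≠ t → H.Adj t p}

/-- The neighbours of `w` that are not twins of `w`. -/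
def nonTwins (H : SimpleGraph W) (w : W) : Set W :=
  H.neighborSet w \ twins H w

lemma mem_nonTwins_iff {w u : W} :
    u ∈ nonTwins H w ↔ H.Adj w u ∧ ∃ p, H.Adj w p ∧ p ≠ u ∧ ¬H.Adj u p := by
  simp only [nonTwins, twins, Set.mem_sdiff, mem_neighborSet]
  grind

lemma mem_nonTwins_of_not_adj {w u p : W} (hwu : H.Adj w u) (hwp : H.Adj w p) (hpu : p ≠ u)
    (hnup : ¬H.Adj u p) : u ∈ nonTwins H w :=
  mem_nonTwins_iff.2 ⟨hwu, p, hwp, hpu, hnup⟩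

lemma insert_twins_subset_commonNeighbors {w u v : W} (hwu : H.Adj w u) (hwv : H.Adj w v)
    (huv : u ≠ v) (hnuv : ¬H.Adj u v) : insert w (twins H w) ⊆ H.commonNeighbors u v := by
  rintro t (rfl | ht)
  · exact ⟨hwu.symm, hwv.symm⟩
  · have htu : u ≠ t := fun h => hnuv (h ▸ ht.2 v hwv (h ▸ huv.symm))
    have htv : v ≠ t := fun h => hnuv (h ▸ ht.2 u hwu (h ▸ huv)).symm
    exact ⟨(ht.2 u hwu htu).symm, (ht.2 v hwv htv).symm⟩

lemma exists_not_adj_of_nonTwins_nonempty {w : W} (hw : (nonTwins H w).Nonempty) :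
    ∃ u ∈ nonTwins H w, ∃ v ∈ nonTwins H w, u ≠ v ∧ ¬H.Adj u v := by
  obtain ⟨u, hu⟩ := hw
  obtain ⟨hwu, v, hwv, hvu, hnuv⟩ := mem_nonTwins_iff.1 hu
  exact ⟨u, hu, v, mem_nonTwins_of_not_adj hwv hwu hvu.symm fun h => hnuv h.symm, hvu.symm, hnuv⟩

lemma ncard_neighborSet_inter_nonTwins [Finite W] {w u : W} (hu : u ∈ nonTwins H w) :
    (H.neighborSet u ∩ nonTwins H w).ncard =
      (H.commonNeighbors w u).ncard - (twins H w).ncard := by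
  have hsub : twins H w ⊆ H.commonNeighbors w u :=
    fun t ht => ⟨ht.1, (ht.2 u hu.1 fun h => hu.2 (h ▸ ht)).symm⟩
  rw [← Set.ncard_sdiff hsub]
  congr 1
  ext t
  simp only [nonTwins, commonNeighbors, Set.mem_inter_iff, Set.mem_sdiff]
  tauto

section Regular

variable [Finite W] {a : ℕ} (hreg : ∀ w, (H.neighborSet w).ncard = a)
include hreg

lemma nonTwins_symm {w u : W} (hu : u ∈ nonTwins H w) : w ∈ nonTwins H u := by
  obtain ⟨hwu, p, hwp, hpu, hnup⟩ := mem_nonTwins_iff.1 hu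
  have hw := ncard_neighborSet_diff_add hwu
  have hu := ncard_neighborSet_diff_add hwu.symm
  rw [hreg] at hw hu
  rw [commonNeighbors_symm] at hu
  have hpos : 0 < (H.neighborSet w \ insert u (H.neighborSet u)).ncard :=
    (Set.ncard_pos).2 ⟨p, hwp, by simp [hpu, hnup]⟩
  obtain ⟨s, hus, hs⟩ := Set.nonempty_of_ncard_ne_zero
    (show (H.neighborSet u \ insert w (H.neighborSet w)).ncard ≠ 0 by lia)
  rw [Set.mem_insert_iff, mem_neighborSet, not_or] at hs
  exact mem_nonTwins_of_not_adj hwu.symm hus hs.1 hs.2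

lemma adj_iff_of_mem_twins {w t x : W} (ht : t ∈ twins H w) (hxt : x ≠ t) (hxw : x ≠ w) :
    H.Adj t x ↔ H.Adj w x := by
  refine ⟨fun htx => ?_, fun hwx => ht.2 x hwx hxt⟩
  by_contra hnwx
  exact (nonTwins_symm hreg (mem_nonTwins_of_not_adj ht.1.symm htx hxw hnwx)).2 ht

end Regular

namespace IsTerwilliger

variable [Finite W] {a m : ℕ} (hH : IsTerwilliger H m)
include hH

lemma nonTwins_nonempty (hreg : ∀ w, (H.neighborSet w).ncard = a) (hm : m ≠ 0) (htop : H ≠ ⊤)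
    (w : W) : (nonTwins H w).Nonempty := by
  obtain ⟨z, hwz, hnwz⟩ := exists_not_adj_of_ne_top hreg htop w
  obtain ⟨t, hwt, hzt⟩ := hH.exists_mem_commonNeighbors hm hwz hnwz
  exact ⟨t, nonTwins_symm hreg (mem_nonTwins_of_not_adj hwt.symm hzt.symm hwz.symm hnwz)⟩

-- Two neighbours `u`, `v` of `w` are linked by a path of nonadjacent pairs, for otherwise
-- `u`, `v` and their nonneighbours in `N(w)` would form an induced quadrangle.
lemma ncard_commonNeighbors_eq_of_mem_nonTwins (hreg : ∀ w, (H.neighborSet w).ncard = a)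
    {w u v : W} (hu : u ∈ nonTwins H w) (hv : v ∈ nonTwins H w) :
    (H.commonNeighbors w u).ncard = (H.commonNeighbors w v).ncard := by
  have hlink {x y : W} (hwx : H.Adj w x) (hwy : H.Adj w y) (hyx : y ≠ x) (hxy : ¬H.Adj x y) :
      (H.commonNeighbors w x).ncard = (H.commonNeighbors w y).ncard :=
    hH.ncard_commonNeighbors_eq hyx.symm hxy hwx.symm hwy.symm (by rw [hreg, hreg])
  obtain ⟨hwu, p, hwp, hpu, hnup⟩ := mem_nonTwins_iff.1 hu
  obtain ⟨hwv, s, hws, hsv, hnvs⟩ := mem_nonTwins_iff.1 hv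
  rcases eq_or_ne u v with rfl | huv
  · rfl
  by_cases hauv : H.Adj u v
  swap
  · exact hlink hwu hwv huv.symm hauv
  by_cases hpv : H.Adj p v
  swap
  · exact (hlink hwu hwp hpu hnup).trans (hlink hwp hwv (by rintro rfl; exact hnup hauv) hpv)
  by_cases hus : H.Adj u s
  swap
  · exact (hlink hwu hws (by rintro rfl; exact hnvs hauv.symm) hus).trans
      (hlink hwv hws hsv hnvs).symm
  have hps : ¬H.Adj p s := fun hps =>
    hnvs (hH.adj hpu.symm hnup ⟨hauv, hpv⟩ ⟨hus, hps⟩ hsv.symm)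
  have hsp : s ≠ p := by rintro rfl; exact hnup hus
  exact (hlink hwu hwp hpu hnup).trans ((hlink hwp hws hsp hps).trans (hlink hwv hws hsv hnvs).symm)

lemma ncard_twins_lt {w : W} (hw : (nonTwins H w).Nonempty) : (twins H w).ncard < m := by
  obtain ⟨u, hu, v, hv, huv, hnuv⟩ := exists_not_adj_of_nonTwins_nonempty hw
  rw [← hH.ncard_commonNeighbors huv hnuv, Nat.lt_iff_add_one_le,
    ← Set.ncard_insert_of_notMem fun h : w ∈ twins H w => H.irrefl h.1]
  exact Set.ncard_le_ncard (insert_twins_subset_commonNeighbors hu.1 hv.1 huv hnuv)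

lemma induce_nonTwins (w : W) :
    IsTerwilliger (H.induce (nonTwins H w)) (m - ((twins H w).ncard + 1)) where
  ncard_commonNeighbors u v huv hnuv := by
    have huv' : (u : W) ≠ v := Subtype.coe_ne_coe.2 huv
    have hsub := insert_twins_subset_commonNeighbors u.2.1 v.2.1 huv' hnuv
    have hsplit : H.commonNeighbors u v ∩ nonTwins H w =
        H.commonNeighbors u v \ insert w (twins H w) := by
      ext t
      simp only [nonTwins, Set.mem_inter_iff, Set.mem_sdiff, Set.mem_insert_iff, not_or]
      refine and_congr_right fun ht => ⟨fun h => ⟨h.1.ne', h.2⟩, fun h => ⟨?_, h.2⟩⟩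
      exact hH.adj huv' hnuv (hsub (Set.mem_insert _ _)) ht (Ne.symm h.1)
    rw [ncard_commonNeighbors_induce, hsplit, Set.ncard_sdiff hsub,
      hH.ncard_commonNeighbors huv' hnuv, Set.ncard_insert_of_notMem fun h => H.irrefl h.1]
  isClique_commonNeighbors u v huv hnuv s hs t ht hst :=
    hH.adj (Subtype.coe_ne_coe.2 huv) hnuv hs ht (Subtype.coe_ne_coe.2 hst)

end IsTerwilliger

end Twins

section Pentagon

variable {W : Type*} {H : SimpleGraph W} {a l m : ℕ}

/-- `H` is the pentagon, described by the properties that enter the counting arguments. -/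
structure IsPentagon (H : SimpleGraph W) : Prop where
  card_eq : Nat.card W = 5
  ncard_neighborSet : ∀ w, (H.neighborSet w).ncard = 2
  cliqueFree : H.CliqueFree 3

namespace IsTerwilliger

variable [Finite W]

lemma exists_ncard_commonNeighbors_eq (hH : IsTerwilliger H m) (hm : m ≠ 0)
    (hreg : ∀ w, (H.neighborSet w).ncard = a) (hnon : ∀ w, nonTwins H w = H.neighborSet w) :
    ∃ l, ∀ u v, H.Adj u v → (H.commonNeighbors u v).ncard = l := by
  have hstar {u v w : W} (hvu : H.Adj v u) (hvw : H.Adj v w) :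
      (H.commonNeighbors v u).ncard = (H.commonNeighbors v w).ncard :=
    hH.ncard_commonNeighbors_eq_of_mem_nonTwins hreg (hnon v ▸ hvu) (hnon v ▸ hvw)
  by_cases hedge : ∃ x y, H.Adj x y
  swap
  · exact ⟨0, fun u v huv => (hedge ⟨u, v, huv⟩).elim⟩
  obtain ⟨x, y, hxy⟩ := hedge
  refine ⟨(H.commonNeighbors x y).ncard, fun u v huv => ?_⟩
  rcases eq_or_ne x u with rfl | hxu
  · exact hstar huv hxy
  by_cases haxu : H.Adj x u
  · rw [hstar huv haxu.symm, commonNeighbors_symm, hstar haxu hxy]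
  · obtain ⟨t, hxt, hut⟩ := hH.exists_mem_commonNeighbors hm hxu haxu
    rw [hstar huv hut, commonNeighbors_symm, hstar hut.symm hxt.symm, commonNeighbors_symm,
      hstar hxt hxy]

section UniqueCommonNeighbor

variable (hH : IsTerwilliger H 1)
include hH

lemma eq_of_adj {u v p s : W} (huv : u ≠ v) (hnuv : ¬H.Adj u v) (hup : H.Adj u p)
    (hvp : H.Adj v p) (hus : H.Adj u s) (hvs : H.Adj v s) : p = s :=
  (Set.ncard_le_one_iff (Set.toFinite _)).1 (hH.ncard_commonNeighbors huv hnuv).le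
    ⟨hup, hvp⟩ ⟨hus, hvs⟩

variable (hl : ∀ u v, H.Adj u v → (H.commonNeighbors u v).ncard = l)
include hl

lemma ncard_claws_add {w u v : W} (hwu : H.Adj w u) (hwv : H.Adj w v) (huv : u ≠ v)
    (hnuv : ¬H.Adj u v) :
    (H.neighborSet w \ (insert u (H.neighborSet u) ∪ insert v (H.neighborSet v))).ncard +
      (2 * l + 2) = (H.neighborSet w).ncard := by
  have hinter : H.neighborSet w ∩ (insert u (H.neighborSet u) ∪ insert v (H.neighborSet v)) =
      insert u (H.commonNeighbors w u) ∪ insert v (H.commonNeighbors w v) := by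
    rw [Set.inter_union_distrib_left, neighborSet_inter_insert hwu, neighborSet_inter_insert hwv]
  have hdisj : Disjoint (insert u (H.commonNeighbors w u)) (insert v (H.commonNeighbors w v)) := by
    rw [Set.disjoint_left]
    rintro t (rfl | ht) (rfl | ht')
    · exact huv rfl
    · exact hnuv ht'.2.symm
    · exact hnuv ht.2
    · exact ht.1.ne (hH.eq_of_adj huv hnuv hwu.symm hwv.symm ht.2 ht'.2)
  rw [← Set.ncard_inter_add_ncard_sdiff_eq_ncard (H.neighborSet w), hinter,
    Set.ncard_union_eq hdisj, Set.ncard_insert_of_notMem fun h => H.irrefl h.2,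
    Set.ncard_insert_of_notMem fun h => H.irrefl h.2, hl w u hwu, hl w v hwv]
  lia

section NoClaw

variable (hreg : ∀ w, (H.neighborSet w).ncard = 2 * l + 2)
include hreg

lemma adj_of_not_adj_of_not_adj {w x y z : W} (hwx : H.Adj w x) (hwy : H.Adj w y) (hwz : H.Adj w z)
    (hxy : x ≠ y) (hnxy : ¬H.Adj x y) (hzx : z ≠ x) (hnxz : ¬H.Adj x z) (hyz : y ≠ z) :
    H.Adj y z := by
  have h := hH.ncard_claws_add hl hwx hwy hxy hnxy
  by_contra hnyz
  have hz : z ∈ H.neighborSet w \ (insert x (H.neighborSet x) ∪ insert y (H.neighborSet y)) :=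
    ⟨hwz, by simp [hzx, hnxz, hyz.symm, hnyz]⟩
  have hpos := (Set.ncard_pos).2 ⟨z, hz⟩
  rw [hreg] at h
  lia

-- Two vertices `p`, `p'` of `N(u)` outside `N[w]` would complete `v`, `w`, `u` to a configuration
-- in which `p` and the common neighbour `s'` of `p'` and `v` have two common neighbours.
lemma ncard_neighborSet_diff_le_one {w u v : W} (hwu : H.Adj w u) (hwv : H.Adj w v) (huv : u ≠ v)
    (hnuv : ¬H.Adj u v) : (H.neighborSet u \ insert w (H.neighborSet w)).ncard ≤ 1 := by
  refine (Set.ncard_le_one_iff (Set.toFinite _)).2 fun {p p'} hp hp' => ?_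
  simp only [Set.mem_sdiff, Set.mem_insert_iff, mem_neighborSet, not_or] at hp hp'
  obtain ⟨hup, hpw, hnwp⟩ := hp
  obtain ⟨hup', hp'w, hnwp'⟩ := hp'
  by_contra hne
  have hpp' : H.Adj p p' :=
    hH.adj_of_not_adj_of_not_adj hl hreg hwu.symm hup hup' (Ne.symm hpw) hnwp hp'w hnwp' hne
  have hfar {x : W} (hux : H.Adj u x) (hxw : x ≠ w) : ¬H.Adj x v := fun hxv =>
    hxw (hH.eq_of_adj huv hnuv hux hxv.symm hwu.symm hwv.symm)
  obtain ⟨s, hps, hvs⟩ :=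
    hH.exists_mem_commonNeighbors one_ne_zero (by rintro rfl; exact hnuv hup) (hfar hup hpw)
  obtain ⟨s', hps', hvs'⟩ :=
    hH.exists_mem_commonNeighbors one_ne_zero (by rintro rfl; exact hnuv hup') (hfar hup' hp'w)
  have hsw : s ≠ w := by rintro rfl; exact hnwp hps.symm
  have hs'w : s' ≠ w := by rintro rfl; exact hnwp' hps'.symm
  have hnus : ¬H.Adj u s := fun h => hfar h hsw hvs.symm
  have hnus' : ¬H.Adj u s' := fun h => hfar h hs'w hvs'.symm
  have hus : u ≠ s := by rintro rfl; exact hnuv hvs.symm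
  have hus' : u ≠ s' := by rintro rfl; exact hnuv hvs'.symm
  have hne_ss' : s ≠ s' := by
    rintro rfl
    exact hne (hH.eq_of_adj hus hnus hup hps.symm hup' hps'.symm)
  have hnws : ¬H.Adj w s := fun h => hus (hH.eq_of_adj (Ne.symm hpw) hnwp hwu hup.symm h hps)
  have hnws' : ¬H.Adj w s' := fun h => hus' (hH.eq_of_adj (Ne.symm hp'w) hnwp' hwu hup'.symm h hps')
  have hss' : H.Adj s s' :=
    hH.adj_of_not_adj_of_not_adj hl hreg hwv.symm hvs hvs' hsw.symm hnws hs'w hnws' hne_ss'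
  have hnps' : ¬H.Adj p s' := fun h =>
    hne (hH.eq_of_adj hus' hnus' hup h.symm hup' hps'.symm)
  have hps'_ne : p ≠ s' := by rintro rfl; exact hnus' hup
  obtain rfl : p' = s := hH.eq_of_adj hps'_ne hnps' hpp' hps'.symm hps hss'.symm
  exact hnus hup'

lemma ncard_commonNeighbors_eq_zero {w u v : W} (hwu : H.Adj w u) (hwv : H.Adj w v) (huv : u ≠ v)
    (hnuv : ¬H.Adj u v) : l = 0 := by
  have hle := hH.ncard_neighborSet_diff_le_one hl hreg hwu hwv huv hnuv
  have hu := ncard_neighborSet_diff_add hwu.symm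
  rw [hreg, hl u w hwu.symm] at hu
  lia

end NoClaw

variable (hreg : ∀ w, (H.neighborSet w).ncard = a)
  (hnon : ∀ w, nonTwins H w = H.neighborSet w)
include hreg hnon

-- By regularity a claw at `w` forces a claw `w, p, p'` at its leaf `u`.
lemma valency_eq_of_leastEigenvalue (hev : LeastEigenvalueGTNegTwo H) {w u v : W}
    (hwu : H.Adj w u) (hwv : H.Adj w v) (huv : u ≠ v) (hnuv : ¬H.Adj u v) : a = 2 * l + 2 := by
  have hclaws := hH.ncard_claws_add hl hwu hwv huv hnuv
  rw [hreg] at hclaws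
  by_contra hne
  obtain ⟨t, hwt, ht⟩ := Set.nonempty_of_ncard_ne_zero
    (show (H.neighborSet w \ (insert u (H.neighborSet u) ∪ insert v (H.neighborSet v))).ncard ≠ 0
      by lia)
  obtain ⟨huw, p, hup, hpw, hnwp⟩ := mem_nonTwins_iff.1 (hnon u ▸ hwu.symm : w ∈ nonTwins H u)
  have hclaws' := hH.ncard_claws_add hl huw hup hpw.symm hnwp
  rw [hreg] at hclaws'
  obtain ⟨p', hup', hp'⟩ := Set.nonempty_of_ncard_ne_zero
    (show (H.neighborSet u \ (insert w (H.neighborSet w) ∪ insert p (H.neighborSet p))).ncard ≠ 0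
      by lia)
  simp only [Set.mem_union, Set.mem_insert_iff, mem_neighborSet, not_or] at ht hp'
  have hfar {x y : W} (hwx : H.Adj w x) (hxu : u ≠ x) (hnux : ¬H.Adj u x) (huy : H.Adj u y)
      (hyw : y ≠ w) : ¬H.Adj x y := fun hxy =>
    hyw (hH.eq_of_adj hxu hnux huy hxy hwu.symm hwx.symm)
  exact hev.not_extendedDFive hwu hwv hwt hup hup' hnuv ht.1.2 ht.2.2 (Ne.symm ht.2.1) hnwp hp'.1.2
    hp'.2.2 (Ne.symm hp'.2.1) (hfar hwv huv hnuv hup hpw) (hfar hwv huv hnuv hup' hp'.1.1)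
    (hfar hwt (Ne.symm ht.1.1) ht.1.2 hup hpw) (hfar hwt (Ne.symm ht.1.1) ht.1.2 hup' hp'.1.1)

end UniqueCommonNeighbor

lemma isPentagon (hH : IsTerwilliger H 1) (hreg : ∀ w, (H.neighborSet w).ncard = a) (htop : H ≠ ⊤)
    (hev : LeastEigenvalueGTNegTwo H) : IsPentagon H := by
  have hnon (w : W) : nonTwins H w = H.neighborSet w := by
    have := hH.ncard_twins_lt (hH.nonTwins_nonempty hreg one_ne_zero htop w)
    rw [nonTwins, (Set.ncard_eq_zero).1 (show (twins H w).ncard = 0 by lia), Set.sdiff_empty]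
  obtain ⟨l, hl⟩ := hH.exists_ncard_commonNeighbors_eq one_ne_zero hreg hnon
  obtain ⟨x, -⟩ := ne_top_iff_exists_not_adj.1 htop
  have : Nonempty W := ⟨x⟩
  obtain ⟨u, hu, v, hv, huv, hnuv⟩ :=
    exists_not_adj_of_nonTwins_nonempty (hH.nonTwins_nonempty hreg one_ne_zero htop x)
  have hclaw := hH.valency_eq_of_leastEigenvalue hl hreg hnon hev hu.1 hv.1 huv hnuv
  subst hclaw
  obtain rfl := hH.ncard_commonNeighbors_eq_zero hl hreg hu.1 hv.1 huv hnuv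
  have hcount := mul_sub_eq_card_sub_mul hreg hl hH.ncard_commonNeighbors
  refine ⟨by lia, hreg, ?_⟩
  classical
  intro t ht
  obtain ⟨b, c, d, hbc, hbd, hcd, -⟩ := is3Clique_iff.1 ht
  have hd : d ∈ H.commonNeighbors b c := ⟨hbd, hcd⟩
  rw [(Set.ncard_eq_zero).1 (hl b c hbc)] at hd
  exact hd

end IsTerwilliger

end Pentagon

section Induction

variable {W : Type*} {H : SimpleGraph W} {a m : ℕ}

namespace IsTerwilliger

lemma induce_nonTwins_ne_top {w : W} (hw : (nonTwins H w).Nonempty) :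
    H.induce (nonTwins H w) ≠ ⊤ := by
  obtain ⟨u, hu, v, hv, huv, hnuv⟩ := exists_not_adj_of_nonTwins_nonempty hw
  exact ne_top_iff_exists_not_adj.2 ⟨⟨u, hu⟩, ⟨v, hv⟩, Subtype.coe_ne_coe.1 huv, hnuv⟩

variable [Finite W]

lemma exists_induce_nonTwins_regular (hH : IsTerwilliger H m)
    (hreg : ∀ w, (H.neighborSet w).ncard = a) (w : W) :
    ∃ b, ∀ u, ((H.induce (nonTwins H w)).neighborSet u).ncard = b := by
  rcases (nonTwins H w).eq_empty_or_nonempty with hw | ⟨v, hv⟩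
  · exact ⟨0, fun u => (hw.subset u.2).elim⟩
  · refine ⟨(H.commonNeighbors w v).ncard - (twins H w).ncard, fun u => ?_⟩
    rw [ncard_neighborSet_induce, ncard_neighborSet_inter_nonTwins u.2,
      hH.ncard_commonNeighbors_eq_of_mem_nonTwins hreg u.2 hv]

lemma twins_eq_empty_of_mem_nonTwins (hH : IsTerwilliger H m)
    (hreg : ∀ w, (H.neighborSet w).ncard = a) (hev : LeastEigenvalueGTNegTwo H) {w v : W}
    (hv : v ∈ nonTwins H w) (hw : (twins H w).Nonempty) : twins H v = ∅ := by
  by_contra hne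
  obtain ⟨w', hw'⟩ := hw
  obtain ⟨v', hv'⟩ := Set.nonempty_iff_ne_empty.2 hne
  obtain ⟨hwv, u, hwu, huv, hnvu⟩ := mem_nonTwins_iff.1 hv
  obtain ⟨hvw, s, hvs, hsw, hnws⟩ := mem_nonTwins_iff.1 (nonTwins_symm hreg hv)
  have hnus : ¬H.Adj u s := fun hus =>
    hnvu (hH.adj hsw.symm hnws ⟨hwv, hvs.symm⟩ ⟨hwu, hus.symm⟩ huv.symm)
  have hw'_iff {x : W} (hxw' : x ≠ w') (hxw : x ≠ w) := adj_iff_of_mem_twins hreg hw' hxw' hxw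
  have hv'_iff {x : W} (hxv' : x ≠ v') (hxv : x ≠ v) := adj_iff_of_mem_twins hreg hv' hxv' hxv
  have hvw' : v ≠ w' := by rintro rfl; exact hv.2 hw'
  have hwv' : w ≠ v' := by rintro rfl; exact (nonTwins_symm hreg hv).2 hv'
  have huw' : u ≠ w' := by rintro rfl; exact hnvu (hw'.2 v hwv hvw').symm
  have huv' : u ≠ v' := by rintro rfl; exact hnvu hv'.1
  have hsv' : s ≠ v' := by rintro rfl; exact hnws (hv'.2 w hvw hwv').symm
  have hsw' : s ≠ w' := by rintro rfl; exact hnws hw'.1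
  have hw'u : H.Adj w' u := (hw'_iff huw' hwu.ne').2 hwu
  have hwv'_adj : H.Adj w v' := ((hv'_iff hwv' hwv.ne).2 hvw).symm
  have hv'w' : v' ≠ w' := by rintro rfl; exact hnvu ((hv'_iff huv' huv).1 hw'u)
  exact hev.not_doubledPath hwu.symm hw'u.symm hw'.1 hwv hwv'_adj ((hw'_iff hvw' hvw.ne).2 hwv)
    ((hw'_iff hv'w' hwv'.symm).2 hwv'_adj) hv'.1 hvs ((hv'_iff hsv' hvs.ne').2 hvs)
    (fun h => hnvu h.symm) (fun h => hnvu ((hv'_iff huv' huv).1 h.symm)) hnus hnws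
    fun h => hnws ((hw'_iff hsw' hsw).1 h)

section LocalPentagon

variable (hH : IsTerwilliger H m) (hreg : ∀ w, (H.neighborSet w).ncard = a) (hm : 2 ≤ m)
  (htop : H ≠ ⊤)
  (hlocal : ∀ w, m = (twins H w).ncard + 1 ∨
    m = (twins H w).ncard + 2 ∧ IsPentagon (H.induce (nonTwins H w)))
include hH hreg hm htop hlocal

lemma twins_eq_empty (hev : LeastEigenvalueGTNegTwo H) (w : W) : twins H w = ∅ := by
  by_contra hne
  obtain ⟨w', hw'⟩ := Set.nonempty_iff_ne_empty.2 hne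
  obtain ⟨v, hv⟩ := hH.nonTwins_nonempty hreg (by lia) htop w
  have hempty := hH.twins_eq_empty_of_mem_nonTwins hreg hev hv ⟨w', hw'⟩
  obtain ⟨-, hpent⟩ := (hlocal v).resolve_left (by rw [hempty, Set.ncard_empty]; lia)
  have hvw' : v ≠ w' := by rintro rfl; exact hv.2 hw'
  have hw_mem : w ∈ nonTwins H v := nonTwins_symm hreg hv
  have hw'_mem : w' ∈ nonTwins H v := ⟨(hw'.2 v hv.1 hvw').symm, by simp [hempty]⟩
  obtain ⟨y, hwy, hyw'⟩ := Set.exists_ne_of_one_lt_ncard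
    (s := (H.induce (nonTwins H v)).neighborSet ⟨w, hw_mem⟩)
    (by rw [hpent.ncard_neighborSet]; lia) ⟨w', hw'_mem⟩
  have hw'y : H.Adj w' y := hw'.2 y hwy fun h => hyw' (Subtype.ext h)
  classical
  refine hpent.cliqueFree {⟨w, hw_mem⟩, ⟨w', hw'_mem⟩, y} (is3Clique_triple_iff.2 ?_)
  exact ⟨hw'.1, hwy, hw'y⟩

lemma not_leastEigenvalueGTNegTwo : ¬LeastEigenvalueGTNegTwo H := by
  intro hev
  have hempty := hH.twins_eq_empty hreg hm htop hlocal hev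
  have hnon (w : W) : nonTwins H w = H.neighborSet w := by rw [nonTwins, hempty, Set.sdiff_empty]
  have hpent (w : W) : m = 2 ∧ IsPentagon (H.induce (nonTwins H w)) := by
    have h := hlocal w
    rw [hempty, Set.ncard_empty] at h
    exact h.resolve_left (by lia)
  obtain ⟨l, hl⟩ := hH.exists_ncard_commonNeighbors_eq (by lia) hreg hnon
  obtain ⟨x, -⟩ := ne_top_iff_exists_not_adj.1 htop
  obtain ⟨rfl, hx⟩ := hpent x
  have ha : a = 5 := by
    have h := hx.card_eq
    rwa [Nat.card_coe_set_eq, hnon, hreg] at h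
  have hl_two : l = 2 := by
    obtain ⟨y, hy⟩ := hH.nonTwins_nonempty hreg two_ne_zero htop x
    have h := hx.ncard_neighborSet ⟨y, hy⟩
    rwa [ncard_neighborSet_induce, ncard_neighborSet_inter_nonTwins hy, hempty, Set.ncard_empty,
      Nat.sub_zero, hl x y hy.1] at h
  subst ha hl_two
  have : Nonempty W := ⟨x⟩
  have hcard : Nat.card W = 11 := by
    have := mul_sub_eq_card_sub_mul hreg hl hH.ncard_commonNeighbors
    lia
  exact absurd (hcard ▸ even_card_mul_of_regular hreg) (by decide)

end LocalPentagon

lemma eq_one_and_isPentagon (hH : IsTerwilliger H m) (hreg : ∀ w, (H.neighborSet w).ncard = a)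
    (hm : m ≠ 0) (htop : H ≠ ⊤) (hev : LeastEigenvalueGTNegTwo H) : m = 1 ∧ IsPentagon H := by
  induction m using Nat.strong_induction_on generalizing W a with
  | _ m ih =>
  by_cases hm_one : m = 1
  · subst hm_one
    exact ⟨rfl, hH.isPentagon hreg htop hev⟩
  refine (hH.not_leastEigenvalueGTNegTwo hreg (by lia) htop (fun w => ?_) hev).elim
  have hnon := hH.nonTwins_nonempty hreg hm htop w
  have hlt := hH.ncard_twins_lt hnon
  obtain ⟨b, hb⟩ := hH.exists_induce_nonTwins_regular hreg w
  refine or_iff_not_imp_left.2 fun hne => ?_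
  obtain ⟨hone, hpent⟩ := ih _ (by lia) (hH.induce_nonTwins w) hb (by lia)
    (induce_nonTwins_ne_top hnon) (hev.of_embedding (Embedding.induce _))
  exact ⟨by lia, hpent⟩

end IsTerwilliger

end Induction

section Distance

variable {V : Type*} {G : SimpleGraph V}

lemma dist_eq_two_iff {u v : V} :
    G.dist u v = 2 ↔ u ≠ v ∧ ¬G.Adj u v ∧ (G.commonNeighbors u v).Nonempty := by
  rw [SimpleGraph.dist, ENat.toNat_eq_iff two_ne_zero]
  exact edist_eq_two_iff

lemma exists_dist_eq_of_le (hG : G.Connected) {x y : V} {i : ℕ} (hi : i ≤ G.dist x y) :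
    ∃ z, G.dist x z = i ∧ G.dist z y = G.dist x y - i := by
  obtain ⟨p, hp⟩ := hG.exists_walk_length_eq_dist x y
  have htake := dist_le (p.take i)
  have hdrop := dist_le (p.drop i)
  have htri := hG.dist_triangle (u := x) (v := p.getVert i) (w := y)
  rw [Walk.take_length, hp] at htake
  rw [Walk.drop_length, hp] at hdrop
  exact ⟨p.getVert i, by lia, by lia⟩

end Distance

section QDistance

variable {V : Type*} [Fintype V] {G : SimpleGraph V} {q : ℝ}

namespace qDistMatrix

lemma apply_of_dist_eq {n : ℕ} {x y : V} (h : G.dist x y = n) :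
    qDistMatrix G q x y = ∑ j ∈ Finset.range n, (1 / q) ^ j := by
  rw [qDistMatrix, of_apply, h]

lemma isSymm : (qDistMatrix G q).IsSymm :=
  IsSymm.ext fun x y => by rw [apply_of_dist_eq rfl, apply_of_dist_eq G.dist_comm]

lemma apply_self (x : V) : qDistMatrix G q x x = 0 := by
  rw [apply_of_dist_eq dist_self, Finset.sum_range_zero]

lemma apply_of_adj {x y : V} (h : G.Adj x y) : qDistMatrix G q x y = 1 := by
  rw [apply_of_dist_eq (dist_eq_one_iff_adj.2 h), Finset.sum_range_one, pow_zero]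

lemma apply_of_dist_eq_two {x y : V} (h : G.dist x y = 2) : qDistMatrix G q x y = 1 + 1 / q := by
  rw [apply_of_dist_eq h, geom_sum_two, add_comm]

-- On a path `x, y, z` with `d(x,z) = 2`, the form of `𝔻_q` is positive on the vectors
-- `e_x - e_z` and `e_y + t (e_x + e_z)`, which are orthogonal for it, when `1 + 1/q < 0`.
lemma pos_of_card_pos_eigenvalues_le_one [DecidableEq V] (hq : q ≠ 0) (hq1 : -1 < q)
    (hM : (qDistMatrix G q).IsHermitian)
    (hone : (Finset.univ.filter fun i : V => 0 < hM.eigenvalues i).card ≤ 1) {x z : V}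
    (hxz : G.dist x z = 2) : 0 < q := by
  obtain ⟨-, -, y, hxy, hzy⟩ := dist_eq_two_iff.1 hxz
  rw [mem_neighborSet] at hxy hzy
  by_contra hneg
  have hq0 : q < 0 := lt_of_le_of_ne (not_lt.1 hneg) hq
  have hr : 1 + 1 / q < 0 := by
    have : 1 / q < -1 := by
      rw [div_lt_iff_of_neg hq0]
      linarith
    linarith
  set t := -1 / (1 + 1 / q)
  have htr : t * (1 + 1 / q) = -1 := div_mul_cancel₀ _ hr.ne
  have ht_pos : 0 < t := div_pos_of_neg_of_neg (by norm_num) hr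
  refine dotProduct_mulVec_ne_zero_of_card_pos_eigenvalues_le_one hM hone
    (u := Pi.single x 1 - Pi.single z 1) (v := t • (Pi.single x 1 + Pi.single z 1) + Pi.single y 1)
    ?_ ?_ ?_ <;>
  simp only [mulVec_add, mulVec_sub, mulVec_smul, dotProduct_add, add_dotProduct, dotProduct_sub,
    sub_dotProduct, dotProduct_smul, smul_dotProduct, mulVec_single_one, single_one_dotProduct,
    col_apply, apply_self, apply_of_adj hxy, apply_of_adj hxy.symm, apply_of_adj hzy,
    apply_of_adj hzy.symm, apply_of_dist_eq_two hxz, apply_of_dist_eq_two (dist_comm.trans hxz),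
    smul_eq_mul]
  · linarith
  · nlinarith
  · ring

lemma add_apply_eq_of_mem_neighborSet [DecidableEq V] [DecidableRel G.Adj] {x : V}
    (u v : G.neighborSet x) :
    qDistMatrix G q u v + (1 / q) * ((G.induce (G.neighborSet x)).adjMatrix ℝ + 2) u v =
      1 + 1 / q + (1 / q - 1) * (1 : Matrix (G.neighborSet x) (G.neighborSet x) ℝ) u v := by
  rw [Matrix.add_apply, adjMatrix_apply, Matrix.ofNat_apply, Matrix.one_apply]
  rcases eq_or_ne u v with rfl | huv
  · simp only [apply_self, SimpleGraph.irrefl, if_true, if_false]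
    push_cast
    ring
  by_cases hauv : G.Adj u v
  · simp [huv, hauv, apply_of_adj]
  · have huv_two : G.dist (u : V) v = 2 := dist_eq_two_iff.2
      ⟨Subtype.coe_ne_coe.2 huv, hauv, x, adj_symm _ u.2, adj_symm _ v.2⟩
    simp [huv, hauv, apply_of_dist_eq_two huv_two]

section NegativeType

variable (hM : IsNegativeType (qDistMatrix G q)) (hq0 : 0 < q) (hq1 : q < 1)
include hM hq0 hq1

lemma isClique_commonNeighbors {x y : V} (hxy : G.dist x y = 2) :
    G.IsClique (G.commonNeighbors x y) := by
  intro s hs t ht hst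
  by_contra hnst
  have hst : G.dist s t = 2 := dist_eq_two_iff.2 ⟨hst, hnst, x, hs.1.symm, ht.1.symm⟩
  have h := hM.quadrilateral isSymm apply_self x s t y
  rw [apply_of_dist_eq_two hxy, apply_of_dist_eq_two hst, apply_of_adj hs.1, apply_of_adj ht.1,
    apply_of_adj (adj_symm _ hs.2), apply_of_adj (adj_symm _ ht.2)] at h
  have := (one_lt_div hq0).2 hq1
  linarith

-- Up to a positive semidefinite term, the Gromov product matrix of `𝔻_q` on the neighbours of `x`
-- is `(1/q) (A + 2 I)`.
lemma leastEigenvalueGTNegTwo_induce_neighborSet (x : V) :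
    LeastEigenvalueGTNegTwo (G.induce (G.neighborSet x)) := by
  classical
  have hr := (one_lt_div hq0).2 hq1
  set B := (G.induce (G.neighborSet x)).adjMatrix ℝ with hB
  have hgromov := (hM.posSemidef_gromovProduct isSymm apply_self x).submatrix
    (Subtype.val : G.neighborSet x → V)
  have hentry : (of fun u v => qDistMatrix G q u x + qDistMatrix G q x v -
      qDistMatrix G q u v).submatrix Subtype.val (Subtype.val : G.neighborSet x → V) +
        (1 / q - 1) • (of fun _ _ => 1) + (1 / q - 1) • 1 = (1 / q) • (B + 2) := by
    ext u v
    have hux : qDistMatrix G q u x = 1 := apply_of_adj (adj_symm _ u.2)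
    have hxv : qDistMatrix G q x v = 1 := apply_of_adj v.2
    have huv := add_apply_eq_of_mem_neighborSet (q := q) u v
    simp only [Matrix.add_apply, submatrix_apply, of_apply, Matrix.smul_apply, smul_eq_mul, hux,
      hxv, hB]
    rw [Matrix.add_apply] at huv
    linarith
  have hones : (of fun _ _ : G.neighborSet x => (1 : ℝ)).PosSemidef := by
    simpa using! posSemidef_vecMulVec_self_star (1 : G.neighborSet x → ℝ)
  have hpos : ((1 / q) • (B + 2)).PosDef :=
    hentry ▸ PosDef.posSemidef_add (hgromov.add (hones.smul (by linarith)))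
      (PosDef.one.smul (by linarith))
  have hscale := hpos.smul hq0
  rw [smul_smul, mul_one_div_cancel hq0.ne', one_smul] at hscale
  rw [LeastEigenvalueGTNegTwo]
  convert hscale

end NegativeType

end qDistMatrix

end QDistance

section DistanceRegular

variable {V : Type*} {G : SimpleGraph V}

lemma isTerwilliger_induce_neighborSet {m : ℕ}
    (hcard : ∀ u v, G.dist u v = 2 → (G.commonNeighbors u v).ncard = m + 1)
    (hclique : ∀ u v, G.dist u v = 2 → G.IsClique (G.commonNeighbors u v)) (y : V) :
    IsTerwilliger (G.induce (G.neighborSet y)) m := by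
  have hdist {u v : G.neighborSet y} (huv : u ≠ v) (hnuv : ¬(G.induce _).Adj u v) :
      G.dist (u : V) v = 2 :=
    dist_eq_two_iff.2 ⟨Subtype.coe_ne_coe.2 huv, hnuv, y, adj_symm _ u.2, adj_symm _ v.2⟩
  refine ⟨fun u v huv hnuv => ?_, fun u v huv hnuv s hs t ht hst =>
    hclique u v (hdist huv hnuv) hs ht (Subtype.coe_ne_coe.2 hst)⟩
  have huv_two := hdist huv hnuv
  have hy : y ∈ G.commonNeighbors u v := ⟨adj_symm _ u.2, adj_symm _ v.2⟩
  have hinter : G.commonNeighbors u v ∩ G.neighborSet y = G.commonNeighbors u v \ {y} := by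
    ext t
    refine and_congr_right fun ht => ⟨fun hyt h => G.irrefl (h ▸ hyt), fun hty => ?_⟩
    exact hclique u v huv_two hy ht (Ne.symm hty)
  rw [ncard_commonNeighbors_induce, hinter, Set.ncard_sdiff_singleton_of_mem hy,
    hcard u v huv_two, Nat.add_sub_cancel]

variable [Fintype V] {D : ℕ} {p : ℕ → ℕ → ℕ → ℕ} (hG : IsDRG G D p)
include hG

namespace IsDRG

lemma exists_dist_eq_of_le_diameter {h : ℕ} (hh : h ≤ D) : ∃ x y, G.dist x y = h := by
  obtain ⟨x, y, hxy⟩ := hG.exists_dist_eq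
  obtain ⟨z, hz, -⟩ := exists_dist_eq_of_le hG.connected (hxy ▸ hh)
  exact ⟨x, z, hz⟩

lemma ncard_sphere {i : ℕ} (hi : i ≤ D) (x : V) : {z | G.dist x z = i}.ncard = p 0 i i := by
  rw [← hG.inter 0 i i D.zero_le hi hi x x dist_self]
  simp only [and_self]

lemma ncard_sphere_inter_neighborSet {h i : ℕ} (hD : 1 ≤ D) (hh : h ≤ D) (hi : i ≤ D) {x y : V}
    (hxy : G.dist x y = h) : {z | G.dist x z = i ∧ G.Adj y z}.ncard = p h i 1 := by
  rw [← hG.inter h i 1 hh hi hD x y hxy]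
  simp only [dist_eq_one_iff_adj]

lemma ncard_neighborSet (hD : 1 ≤ D) (x : V) : (G.neighborSet x).ncard = p 0 1 1 := by
  rw [← hG.ncard_sphere hD x]
  simp only [dist_eq_one_iff_adj, neighborSet]

lemma ncard_commonNeighbors {h : ℕ} (hD : 1 ≤ D) (hh : h ≤ D) {x y : V} (hxy : G.dist x y = h) :
    (G.commonNeighbors x y).ncard = p h 1 1 := by
  rw [← hG.ncard_sphere_inter_neighborSet hD hh hD hxy]
  simp only [dist_eq_one_iff_adj]
  rfl

lemma mul_inter_eq_mul_inter {h i j : ℕ} (hh : h ≤ D) (hi : i ≤ D) (hj : j ≤ D) :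
    p 0 h h * p h i j = p 0 i i * p i h j := by
  obtain ⟨x⟩ := hG.connected.nonempty
  rw [← hG.ncard_sphere hh x, ← hG.ncard_sphere hi x]
  refine ncard_mul_eq_ncard_mul (fun z w => G.dist z w = j)
    (fun z hz => hG.inter h i j hh hi hj x z hz) fun w hw => ?_
  rw [← hG.inter i h j hi hh hj x w hw]
  simp only [G.dist_comm (u := w), Set.mem_ofPred_eq]

lemma inter_one_zero_one (hD : 1 ≤ D) : p 1 0 1 = 1 := by
  obtain ⟨x, y, hxy⟩ := hG.exists_dist_eq_of_le_diameter hD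
  rw [← hG.ncard_sphere_inter_neighborSet hD hD D.zero_le hxy, Set.ncard_eq_one]
  refine ⟨x, Set.ext fun z => ?_⟩
  rw [Set.mem_ofPred_eq, hG.connected.dist_eq_zero_iff, Set.mem_singleton_iff]
  refine ⟨fun h => h.1.symm, ?_⟩
  rintro rfl
  exact ⟨rfl, (dist_eq_one_iff_adj.1 hxy).symm⟩

lemma inter_add_inter_add_ncard {i : ℕ} (hi : i + 1 ≤ D) {x y : V} (hxy : G.dist x y = i + 1) :
    p (i + 1) i 1 + p (i + 1) (i + 1) 1 + {z | G.dist x z = i + 2 ∧ G.Adj y z}.ncard =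
      p 0 1 1 := by
  have hD : 1 ≤ D := by lia
  rw [← hG.ncard_sphere_inter_neighborSet hD hi (by lia) hxy,
    ← hG.ncard_sphere_inter_neighborSet hD hi hi hxy, ← hG.ncard_neighborSet hD y,
    ← Set.ncard_union_eq, ← Set.ncard_union_eq]
  · congr 1
    ext z
    simp only [Set.mem_union, Set.mem_ofPred_eq, ← or_and_right, mem_neighborSet,
      and_iff_right_iff_imp]
    intro hyz
    have := hyz.diff_dist_adj (u := x)
    lia
  all_goals
    simp only [Set.disjoint_left, Set.mem_union, Set.mem_ofPred_eq]
    lia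

lemma inter_le_inter_succ {i : ℕ} (hi : i + 2 ≤ D) :
    p (i + 1) i 1 ≤ p (i + 2) (i + 1) 1 := by
  have hD : 1 ≤ D := by lia
  obtain ⟨x, y, hxy⟩ := hG.exists_dist_eq_of_le_diameter hi
  obtain ⟨w, hxw, hwy⟩ := exists_dist_eq_of_le hG.connected (x := x) (y := y) (i := 1) (by lia)
  replace hwy : G.dist w y = i + 1 := by lia
  rw [← hG.ncard_sphere_inter_neighborSet hD (by lia) (by lia) hwy,
    ← hG.ncard_sphere_inter_neighborSet hD hi (by lia) hxy]
  refine Set.ncard_le_ncard fun z ⟨hwz, hyz⟩ => ⟨?_, hyz⟩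
  have hxz := hG.connected.dist_triangle (u := x) (v := w) (w := z)
  have hxy' := hG.connected.dist_triangle (u := x) (v := z) (w := y)
  rw [dist_eq_one_iff_adj.2 hyz.symm] at hxy'
  lia

lemma even_mul_inter {i : ℕ} (hD : 1 ≤ D) (hi : i ≤ D) : Even (p 0 i i * p i i 1) := by
  obtain ⟨x⟩ := hG.connected.nonempty
  rw [← hG.ncard_sphere hi x, ← Nat.card_coe_set_eq]
  refine even_card_mul_of_regular (H := G.induce {z | G.dist x z = i}) fun w => ?_
  rw [ncard_neighborSet_induce, ← hG.ncard_sphere_inter_neighborSet hD hi hi w.2, Set.inter_comm]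
  rfl

lemma dist_eq_of_inter_eq {h i : ℕ} (hD : 1 ≤ D) (hh : h ≤ D) (hi : i ≤ D)
    (hp : p h i 1 = p 0 1 1) {x y z : V} (hxy : G.dist x y = h) (hyz : G.Adj y z) :
    G.dist x z = i := by
  have heq : {z | G.dist x z = i ∧ G.Adj y z} = G.neighborSet y := by
    refine Set.eq_of_subset_of_ncard_le (fun z hz => hz.2) ?_
    rw [hG.ncard_sphere_inter_neighborSet hD hh hi hxy, hG.ncard_neighborSet hD, hp]
  exact (heq.symm ▸ hyz : z ∈ {z | G.dist x z = i ∧ G.Adj y z}).1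

lemma inter_two_two_one_ne_zero (hD : 2 ≤ D) (hlt : p 2 1 1 ≤ p 1 1 1) : p 2 2 1 ≠ 0 := by
  obtain ⟨x, z, hxz⟩ := hG.exists_dist_eq_of_le_diameter hD
  obtain ⟨-, -, y, hxy, hzy⟩ := dist_eq_two_iff.1 hxz
  have hyz : G.dist y z = 1 := dist_eq_one_iff_adj.2 (adj_symm _ hzy)
  have hlt : (G.commonNeighbors x z \ {y}).ncard < (G.commonNeighbors y z).ncard := by
    have := Set.ncard_sdiff_singleton_lt_of_mem (s := G.commonNeighbors x z) ⟨hxy, hzy⟩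
    rw [hG.ncard_commonNeighbors (by lia) (by lia) hyz]
    rw [hG.ncard_commonNeighbors (by lia) hD hxz] at this
    lia
  obtain ⟨w, ⟨hyw, hzw⟩, hw⟩ := Set.exists_mem_notMem_of_ncard_lt_ncard hlt
  have hxw : G.dist x w = 2 := by
    refine dist_eq_two_iff.2 ⟨?_, fun hxw => hw ⟨⟨hxw, hzw⟩, hyw.ne'⟩, y, hxy, adj_symm _ hyw⟩
    rintro rfl
    exact (dist_eq_two_iff.1 hxz).2.1 (adj_symm _ hzw)
  rw [← hG.ncard_sphere_inter_neighborSet (by lia) hD hD hxz]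
  exact Set.ncard_ne_zero_of_mem (a := w) ⟨hxw, hzw⟩

end IsDRG

section Icosahedron

variable (hk : p 0 1 1 = 5) (ha : p 1 1 1 = 2) (hc : p 2 1 1 = 2)
include hk ha hc

namespace IsDRG

-- `a₂` is even because `k₂ = 5` is odd, it is nonzero, and it is at most `k - c₂ = 3`.
lemma sphere_two_parameters (hD : 2 ≤ D) : p 0 2 2 = 5 ∧ p 2 2 1 = 2 := by
  have hb₁ : p 1 2 1 = 2 := by
    obtain ⟨x, y, hxy⟩ := hG.exists_dist_eq_of_le_diameter (h := 1) (by lia)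
    have hsum := hG.inter_add_inter_add_ncard (i := 0) (by lia) hxy
    rw [hG.ncard_sphere_inter_neighborSet (by lia) (by lia) hD hxy, zero_add,
      hG.inter_one_zero_one (by lia)] at hsum
    lia
  have hk₂ : p 0 2 2 = 5 := by
    have := hG.mul_inter_eq_mul_inter (h := 1) (i := 2) (j := 1) (by lia) hD (by lia)
    rw [hk, hb₁, hc] at this
    lia
  have ha₂_even : Even (p 2 2 1) := by
    have := hG.even_mul_inter (by lia) hD
    rw [hk₂, Nat.even_mul] at this
    exact this.resolve_left (by decide)
  have ha₂_ne := hG.inter_two_two_one_ne_zero hD (by lia)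
  have ha₂_le : p 2 1 1 + p 2 2 1 ≤ p 0 1 1 := by
    obtain ⟨x, y, hxy⟩ := hG.exists_dist_eq_of_le_diameter hD
    have := hG.inter_add_inter_add_ncard hD hxy
    lia
  obtain ⟨n, hn⟩ := ha₂_even
  exact ⟨hk₂, by lia⟩

lemma sphere_three_parameters (hD : 2 ≤ D) :
    3 ≤ D ∧ p 2 3 1 = 1 ∧ p 0 3 3 = 1 ∧ p 3 2 1 = 5 := by
  obtain ⟨hk₂, ha₂⟩ := hG.sphere_two_parameters hk ha hc hD
  obtain ⟨x, y, hxy⟩ := hG.exists_dist_eq_of_le_diameter hD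
  have hb₂ : {z | G.dist x z = 3 ∧ G.Adj y z}.ncard = 1 := by
    have := hG.inter_add_inter_add_ncard hD hxy
    lia
  have hD₃ : 3 ≤ D := by
    obtain ⟨z, hz⟩ := Set.nonempty_of_ncard_ne_zero (hb₂ ▸ one_ne_zero)
    exact hz.1 ▸ hG.dist_le x z
  rw [hG.ncard_sphere_inter_neighborSet (by lia) hD hD₃ hxy] at hb₂
  have hmul := hG.mul_inter_eq_mul_inter (h := 2) (i := 3) (j := 1) hD hD₃ (by lia)
  rw [hk₂, hb₂, mul_one] at hmul
  have hc₃ := hG.inter_le_inter_succ (i := 1) hD₃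
  have hdvd : p 3 2 1 ∣ 5 := Dvd.intro_left _ hmul.symm
  have hc₃_eq : p 3 2 1 = 5 := ((Nat.dvd_prime (by norm_num)).1 hdvd).resolve_left (by lia)
  rw [hc₃_eq] at hmul
  exact ⟨hD₃, hb₂, by lia, hc₃_eq⟩

-- In the icosahedron, `x, b, c, y` is a path joining antipodes, with `b, c` antipodal as well.
lemma exists_antipodal_quadrilateral (hD : 2 ≤ D) :
    ∃ x b c y, G.dist x b = 1 ∧ G.dist c y = 1 ∧ G.dist x c = 2 ∧ G.dist b y = 2 ∧
      G.dist x y = 3 ∧ G.dist b c = 3 := by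
  obtain ⟨hD₃, hb₂, hk₃, hc₃⟩ := hG.sphere_three_parameters hk ha hc hD
  have hanti {u v w : V} (huv : G.dist u v = 3) (hvw : G.Adj v w) : G.dist u w = 2 :=
    hG.dist_eq_of_inter_eq (by lia) hD₃ hD (hc₃.trans hk.symm) huv hvw
  obtain ⟨x, y, hxy⟩ := hG.exists_dist_eq_of_le_diameter hD₃
  obtain ⟨b, hxb⟩ := Set.nonempty_of_ncard_ne_zero (s := G.neighborSet x)
    (by rw [hG.ncard_neighborSet (by lia), hk]; decide)
  obtain ⟨c, hbc⟩ := Set.nonempty_of_ncard_ne_zero (s := {z | G.dist b z = 3})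
    (by rw [hG.ncard_sphere hD₃, hk₃]; decide)
  have hyb := hanti (dist_comm.trans hxy) hxb
  have hcx := hanti (dist_comm.trans hbc) (adj_symm _ hxb)
  obtain ⟨w, hxw, hcw⟩ := Set.nonempty_of_ncard_ne_zero (s := {z | G.dist x z = 3 ∧ G.Adj c z})
    (by rw [hG.ncard_sphere_inter_neighborSet (by lia) hD hD₃ (dist_comm.trans hcx), hb₂]; decide)
  have hwy : w = y :=
    (Set.ncard_le_one_iff (Set.toFinite _)).1 (hk₃ ▸ hG.ncard_sphere hD₃ x).le hxw hxy
  exact ⟨x, b, c, y, dist_eq_one_iff_adj.2 hxb, dist_eq_one_iff_adj.2 (hwy ▸ hcw),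
    dist_comm.trans hcx, dist_comm.trans hyb, hxy, hbc⟩

lemma not_isNegativeType_qDistMatrix (hD : 2 ≤ D) {q : ℝ} (hq0 : 0 < q) (hq1 : q < 1) :
    ¬IsNegativeType (qDistMatrix G q) := by
  intro hM
  obtain ⟨x, b, c, y, hxb, hcy, hxc, hby, hxy, hbc⟩ :=
    hG.exists_antipodal_quadrilateral hk ha hc hD
  have h := hM.quadrilateral qDistMatrix.isSymm qDistMatrix.apply_self x b c y
  simp only [qDistMatrix.apply_of_dist_eq hxb, qDistMatrix.apply_of_dist_eq hcy,
    qDistMatrix.apply_of_dist_eq hxc, qDistMatrix.apply_of_dist_eq hby,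
    qDistMatrix.apply_of_dist_eq hxy, qDistMatrix.apply_of_dist_eq hbc,
    Finset.sum_range_succ, Finset.sum_range_zero] at h
  have hr := (one_lt_div hq0).2 hq1
  nlinarith

end IsDRG

end Icosahedron

namespace IsDRG

lemma local_parameters {q : ℝ} (hD : 2 ≤ D) (hM : IsNegativeType (qDistMatrix G q)) (hq0 : 0 < q)
    (hq1 : q < 1) (hc : p 2 1 1 ≠ 1) : p 0 1 1 = 5 ∧ p 1 1 1 = 2 ∧ p 2 1 1 = 2 := by
  obtain ⟨x, z, hxz⟩ := hG.exists_dist_eq_of_le_diameter hD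
  have hcard {u v : V} (huv : G.dist u v = 2) : (G.commonNeighbors u v).ncard = p 2 1 1 :=
    hG.ncard_commonNeighbors (by lia) hD huv
  obtain ⟨hxz_ne, hnxz, y, hxy, hzy⟩ := dist_eq_two_iff.1 hxz
  have hc_pos : p 2 1 1 ≠ 0 := hcard hxz ▸ Set.ncard_ne_zero_of_mem (a := y) ⟨hxy, hzy⟩
  have hT : IsTerwilliger (G.induce (G.neighborSet y)) (p 2 1 1 - 1) :=
    isTerwilliger_induce_neighborSet (fun u v huv => by rw [hcard huv]; lia)
      (fun u v => qDistMatrix.isClique_commonNeighbors hM hq0 hq1) y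
  have hreg (u : G.neighborSet y) :
      ((G.induce (G.neighborSet y)).neighborSet u).ncard = p 1 1 1 := by
    rw [ncard_neighborSet_induce]
    exact hG.ncard_commonNeighbors (by lia) (by lia) (dist_eq_one_iff_adj.2 (adj_symm _ u.2))
  have htop : G.induce (G.neighborSet y) ≠ ⊤ := ne_top_iff_exists_not_adj.2
    ⟨⟨x, adj_symm _ hxy⟩, ⟨z, adj_symm _ hzy⟩, Subtype.coe_ne_coe.1 hxz_ne, hnxz⟩
  obtain ⟨hm, hpent⟩ := hT.eq_one_and_isPentagon hreg (by lia) htop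
    (qDistMatrix.leastEigenvalueGTNegTwo_induce_neighborSet hM hq0 hq1 y)
  refine ⟨?_, ?_, by lia⟩
  · rw [← hG.ncard_neighborSet (by lia) y, ← Nat.card_coe_set_eq, hpent.card_eq]
  · rw [← hreg ⟨x, adj_symm _ hxy⟩, hpent.ncard_neighborSet]

theorem inter_two_one_one_eq_one {q : ℝ} (hD : 2 ≤ D) (hM : IsNegativeType (qDistMatrix G q))
    (hq0 : 0 < q) (hq1 : q < 1) : p 2 1 1 = 1 := by
  by_contra hc
  obtain ⟨hk, ha, hc⟩ := hG.local_parameters hD hM hq0 hq1 hc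
  exact hG.not_isNegativeType_qDistMatrix hk ha hc hD hq0 hq1 hM

lemma sum_dist_eq (f : ℕ → ℝ) (x : V) :
    ∑ y, f (G.dist x y) = ∑ i ∈ Finset.range (D + 1), (p 0 i i : ℝ) * f i := by
  have hmaps : ∀ y ∈ Finset.univ, G.dist x y ∈ Finset.range (D + 1) := fun y _ =>
    Finset.mem_range.2 (Nat.lt_succ_of_le (hG.dist_le x y))
  rw [← Finset.sum_fiberwise_of_maps_to hmaps]
  refine Finset.sum_congr rfl fun i hi => ?_
  have hcard : (Finset.univ.filter fun y => G.dist x y = i).card = p 0 i i := by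
    rw [← hG.ncard_sphere (Nat.le_of_lt_succ (Finset.mem_range.1 hi)) x, ← Set.ncard_coe_finset]
    simp
  rw [Finset.sum_congr rfl fun y hy => congrArg f (Finset.mem_filter.1 hy).2, Finset.sum_const,
    nsmul_eq_mul, hcard]

-- The all-ones vector is an eigenvector of `𝔻_q` for a positive eigenvalue, its row sum.
lemma isNegativeType_qDistMatrix [DecidableEq V] {q : ℝ} (hD : D ≠ 0) (hq0 : 0 < q)
    (hM : (qDistMatrix G q).IsHermitian)
    (hone : (Finset.univ.filter fun i : V => 0 < hM.eigenvalues i).card ≤ 1) :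
    IsNegativeType (qDistMatrix G q) := by
  have := hG.connected.nonempty
  have hrow := hG.sum_dist_eq fun n => ∑ j ∈ Finset.range n, (1 / q) ^ j
  refine IsNegativeType.of_card_pos_eigenvalues_le_one hM hone ?_ hrow
  obtain ⟨x, y, hxy⟩ := hG.exists_dist_eq
  rw [← hrow x]
  refine Finset.sum_pos' (fun z _ => by positivity) ⟨y, Finset.mem_univ y, ?_⟩
  exact Finset.sum_pos (fun j _ => by positivity) (Finset.nonempty_range_iff.2 (hxy ▸ hD))

end IsDRG

end DistanceRegular

/-- Let `Γ` be a distance-regular graph of diameter `D ≥ 2` whose `q`-distance matrix has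
exactly one positive eigenvalue for some `-1 < q < 1`, `q ≠ 0`. Then `c₂ = 1` and
`0 < q < 1`. -/
theorem stmt19 {V : Type*} [Fintype V] [DecidableEq V] (G : SimpleGraph V)
    (D : ℕ) (p : ℕ → ℕ → ℕ → ℕ) (hdrg : IsDRG G D p) (hD : 2 ≤ D)
    (q : ℝ) (hq : q ≠ 0) (hq1 : -1 < q) (hq2 : q < 1)
    (hH : (qDistMatrix G q).IsHermitian)
    (hone : (Finset.univ.filter fun i : V => 0 < hH.eigenvalues i).card = 1) :
    p 2 1 1 = 1 ∧ 0 < q := by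
  obtain ⟨x, z, hxz⟩ := hdrg.exists_dist_eq_of_le_diameter hD
  have hq0 : 0 < q := qDistMatrix.pos_of_card_pos_eigenvalues_le_one hq hq1 hH hone.le hxz
  have hneg := hdrg.isNegativeType_qDistMatrix (by lia) hq0 hH hone.le
  exact ⟨hdrg.inter_two_one_one_eq_one hD hneg hq0 hq2, hq0⟩
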